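/- For every solution of the backward Ricci flow system of class U3I0 (case (i)) with λ₂ ≥ λ₃, for all t ∈ [0,T): B(t) = (λ₄/(2A(t)D(t)))·(λ₁(λ₂−λ₃) + √(λ₁²(λ₂−λ₃)² + 4A(t)²λ₂λ₃)) and C(t) = (λ₄/(2A(t)D(t)))·(λ₁(λ₃−λ₂) + √(λ₁²(λ₂−λ₃)² + 4A(t)²λ₂λ₃)). -/

import Mathlib

open Real Set ENNReal

/-- The time domain `[0, T)` where `T ∈ (0, ∞]` is an extended nonnegative real. -/
def flowDomain (T : ℝ≥0∞) : Set ℝ := {t : ℝ | 0 ≤ t ∧ ENNReal.ofReal t < T}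

theorem flowDomain_convex (T : ℝ≥0∞) : Convex ℝ (flowDomain T) := by
  apply Set.OrdConnected.convex
  refine ⟨fun x hx y hy z hz => ⟨hx.1.trans hz.1, ?_⟩⟩
  exact (ENNReal.ofReal_le_ofReal hz.2).trans_lt hy.2

theorem flowDomain_const (T : ℝ≥0∞) (f : ℝ → ℝ)
    (hf : ∀ t ∈ flowDomain T, HasDerivWithinAt f 0 (flowDomain T) t)
    (t : ℝ) (ht : t ∈ flowDomain T) (h0 : (0 : ℝ) ∈ flowDomain T) : f t = f 0 := by
  have h := (flowDomain_convex T).norm_image_sub_le_of_norm_hasDerivWithin_le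
    (C := 0) hf (fun x _ => by simp) h0 ht
  rw [zero_mul] at h
  exact sub_eq_zero.mp (norm_le_zero_iff.mp h)

/-- For every solution of the backward Ricci flow system of class `U3I0`, case (i), with
`λ₂ ≥ λ₃`, for all `t ∈ [0,T)`:
`B(t) = (λ₄/(2AD))·(λ₁(λ₂−λ₃) + √(λ₁²(λ₂−λ₃)² + 4A²λ₂λ₃))` and
`C(t) = (λ₄/(2AD))·(λ₁(λ₃−λ₂) + √(λ₁²(λ₂−λ₃)² + 4A²λ₂λ₃))`. -/
theorem stmt10 (T : ℝ≥0∞) (hT : 0 < T)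
    (lam1 lam2 lam3 lam4 : ℝ)
    (hlam1 : 0 < lam1) (hlam2 : 0 < lam2) (hlam3 : 0 < lam3) (hlam4 : 0 < lam4)
    (hle : lam3 ≤ lam2)
    (A B C D : ℝ → ℝ)
    (hpos : ∀ t ∈ flowDomain T, 0 < A t ∧ 0 < B t ∧ 0 < C t ∧ 0 < D t)
    (hA : ∀ t ∈ flowDomain T,
      HasDerivWithinAt A (-(B t / C t) - C t / B t - 2) (flowDomain T) t)
    (hB : ∀ t ∈ flowDomain T,
      HasDerivWithinAt B (-(C t / A t) - D t / C t + B t ^ 2 / (A t * C t)) (flowDomain T) t)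
    (hC : ∀ t ∈ flowDomain T,
      HasDerivWithinAt C (-(B t / A t) - D t / B t + C t ^ 2 / (A t * B t)) (flowDomain T) t)
    (hD : ∀ t ∈ flowDomain T,
      HasDerivWithinAt D (D t ^ 2 / (B t * C t)) (flowDomain T) t)
    (hA0 : A 0 = lam1) (hB0 : B 0 = lam2) (hC0 : C 0 = lam3) (hD0 : D 0 = lam4) :
    ∀ t ∈ flowDomain T,
      B t = lam4 / (2 * A t * D t) *
        (lam1 * (lam2 - lam3) +
          Real.sqrt (lam1 ^ 2 * (lam2 - lam3) ^ 2 + 4 * A t ^ 2 * lam2 * lam3)) ∧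
      C t = lam4 / (2 * A t * D t) *
        (lam1 * (lam3 - lam2) +
          Real.sqrt (lam1 ^ 2 * (lam2 - lam3) ^ 2 + 4 * A t ^ 2 * lam2 * lam3)) := by
  intro t ht
  have h0 : (0 : ℝ) ∈ flowDomain T := ⟨le_rfl, by simpa using hT⟩
  have e1 : B t * C t * D t ^ 2 = lam2 * lam3 * lam4 ^ 2 := by
    have := flowDomain_const T (fun t => B t * C t * D t ^ 2) (fun s hs => by
      obtain ⟨a, b, c, d⟩ := hpos s hs
      have h := ((hB s hs).mul (hC s hs)).mul ((hD s hs).pow 2)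
      refine HasDerivWithinAt.congr_deriv h ?_
      simp only [Pi.mul_apply, Pi.pow_apply, Pi.sub_apply]
      field_simp
      push_cast
      ring) t ht h0
    simpa only [hB0, hC0, hD0] using this
  have e2 : A t * D t * (B t - C t) = lam1 * lam4 * (lam2 - lam3) := by
    have := flowDomain_const T (fun t => A t * D t * (B t - C t)) (fun s hs => by
      obtain ⟨a, b, c, d⟩ := hpos s hs
      have h := ((hA s hs).mul (hD s hs)).mul ((hB s hs).sub (hC s hs))
      refine HasDerivWithinAt.congr_deriv h ?_
      simp only [Pi.mul_apply, Pi.pow_apply, Pi.sub_apply]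
      field_simp
      ring) t ht h0
    simpa only [hA0, hB0, hC0, hD0] using this
  obtain ⟨a, b, c, d⟩ := hpos t ht
  have hk : lam1 * (lam2 - lam3) = A t * D t / lam4 * (B t - C t) := by
    field_simp
    linarith
  have hm : lam2 * lam3 = B t * C t * D t ^ 2 / lam4 ^ 2 := by
    field_simp
    linarith
  have hs : Real.sqrt (lam1 ^ 2 * (lam2 - lam3) ^ 2 + 4 * A t ^ 2 * lam2 * lam3)
      = A t * D t / lam4 * (B t + C t) := by
    rw [← Real.sqrt_sq (show 0 ≤ A t * D t / lam4 * (B t + C t) by positivity)]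
    congr 1
    rw [← mul_pow, hk, mul_assoc _ lam2 lam3, hm]
    field_simp
    ring
  have hk2 : lam1 * (lam3 - lam2) = - (A t * D t / lam4 * (B t - C t)) := by
    rw [← hk]; ring
  rw [hs, hk, hk2]
  constructor
  · field_simp
    ring
  · field_simp
    ring
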